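/- For every nonnegative integer n, the identity E*_{2n+1}(q)/(q;q)_{2n+1} = Σ_{D∈Dyck_{2n}} q^{H(D)} Π_{(a,b)∈D} 1/(1−q^{2b+1}) holds in the field of rational functions ℚ(q), where the product runs over all lattice points (a,b) of the Dyck path D. -/

import Mathlib

open Finset

attribute [local instance 10] Classical.propDecidable

noncomputable section

namespace Paper

/-! ### Words and permutation statistics (all words are 1-based). -/

/-- The word (one-line notation, 1-based) of a permutation of `{1, …, N}`:
`word π i = π(i)` for `1 ≤ i ≤ N`, and `0` otherwise. -/
def word {N : ℕ} (π : Equiv.Perm (Fin N)) (i : ℕ) : ℕ :=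
  if h : 1 ≤ i ∧ i ≤ N then (π ⟨i - 1, by omega⟩ : ℕ) + 1 else 0

/-- The major index of a word of length `N`: the sum of the descents. -/
def majW (N : ℕ) (w : ℕ → ℕ) : ℕ :=
  ∑ i ∈ Finset.Icc 1 (N - 1), if w (i + 1) < w i then i else 0

/-- The number of inversions of a word of length `N`. -/
def invW (N : ℕ) (w : ℕ → ℕ) : ℕ :=
  (((Finset.Icc 1 N) ×ˢ (Finset.Icc 1 N)).filter
    fun p => p.1 < p.2 ∧ w p.2 < w p.1).card

/-- The number of descents of a word of length `m`. -/
def desW (m : ℕ) (w : ℕ → ℕ) : ℕ :=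
  ((Finset.Icc 1 (m - 1)).filter fun i => w (i + 1) < w i).card

/-- The number of ascents of a word of length `m`. -/
def ascW (m : ℕ) (w : ℕ → ℕ) : ℕ :=
  ((Finset.Icc 1 (m - 1)).filter fun i => w i < w (i + 1)).card

/-- The number of non-descents of a word of length `m`. -/
def ndesW (m : ℕ) (w : ℕ → ℕ) : ℕ :=
  ((Finset.Icc 1 m).filter fun i => i = m ∨ w i < w (i + 1)).card

/-- The number of non-ascents of a word of length `m`. -/
def nascW (m : ℕ) (w : ℕ → ℕ) : ℕ :=
  ((Finset.Icc 1 m).filter fun i => i = m ∨ ¬ w i < w (i + 1)).card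

/-- `π_e = π₂π₄⋯`, the subword of even-position entries, as a 1-based word. -/
def evenWord {N : ℕ} (π : Equiv.Perm (Fin N)) (j : ℕ) : ℕ := word π (2 * j)

/-- `π_o = π₁π₃⋯`, the subword of odd-position entries, as a 1-based word. -/
def oddWord {N : ℕ} (π : Equiv.Perm (Fin N)) (j : ℕ) : ℕ := word π (2 * j - 1)

/-- A word of length `N` is alternating: `w₁ < w₂ > w₃ < w₄ > ⋯`. -/
def IsAltW (N : ℕ) (w : ℕ → ℕ) : Prop :=
  ∀ i ∈ Finset.Icc 1 (N - 1), (i % 2 = 1 → w i < w (i + 1)) ∧ (i % 2 = 0 → w (i + 1) < w i)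

/-- A word of length `N` is reverse alternating: `w₁ > w₂ < w₃ > w₄ < ⋯`. -/
def IsRaltW (N : ℕ) (w : ℕ → ℕ) : Prop :=
  ∀ i ∈ Finset.Icc 1 (N - 1), (i % 2 = 1 → w (i + 1) < w i) ∧ (i % 2 = 0 → w i < w (i + 1))

/-- `Alt_N`, the set of alternating permutations of `{1, …, N}`. -/
def altPerms (N : ℕ) : Finset (Equiv.Perm (Fin N)) :=
  Finset.univ.filter fun π => IsAltW N (word π)

/-- `Ralt_N`, the set of reverse alternating permutations of `{1, …, N}`. -/
def raltPerms (N : ℕ) : Finset (Equiv.Perm (Fin N)) :=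
  Finset.univ.filter fun π => IsRaltW N (word π)

/-- `κ_N = (1)(2,3)(4,5)⋯`, acting on the 1-based values `{1, …, N}`. -/
def kappaNat (N j : ℕ) : ℕ :=
  if j % 2 = 0 ∧ 2 ≤ j ∧ j + 1 ≤ N then j + 1
  else if j % 2 = 1 ∧ 3 ≤ j ∧ j ≤ N then j - 1
  else j

/-- `η_N = (1,2)(3,4)⋯`, acting on the 1-based values `{1, …, N}`. -/
def etaNat (N j : ℕ) : ℕ :=
  if j % 2 = 1 ∧ j + 1 ≤ N then j + 1
  else if j % 2 = 0 ∧ 2 ≤ j ∧ j ≤ N then j - 1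
  else j

/-- `maj(π⁻¹)`. -/
def majInv (N : ℕ) (π : Equiv.Perm (Fin N)) : ℕ := majW N (word π.symm)

/-- `maj(κ_N π⁻¹)`. -/
def majKappaInv (N : ℕ) (π : Equiv.Perm (Fin N)) : ℕ :=
  majW N fun i => kappaNat N (word π.symm i)

/-- `maj(η_N π⁻¹)`. -/
def majEtaInv (N : ℕ) (π : Equiv.Perm (Fin N)) : ℕ :=
  majW N fun i => etaNat N (word π.symm i)

/-- The reversal permutation `i ↦ N + 1 - i` of `Fin N`. -/
def revPerm (N : ℕ) : Equiv.Perm (Fin N) :=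
  ⟨Fin.rev, Fin.rev, fun i => Fin.rev_rev i, fun i => Fin.rev_rev i⟩

/-- `φ(π)ᵢ = (N+1) - π_{N+1-i}`. -/
def phiMap {N : ℕ} (π : Equiv.Perm (Fin N)) : Equiv.Perm (Fin N) :=
  ((revPerm N).trans π).trans (revPerm N)

/-! ### Lattice paths.

A path with `L` unit steps is encoded by `s : Fin L → Bool` (`true` = up-step `(1,1)`,
`false` = down-step `(1,-1)`). -/

/-- The vertical displacement of the `j`-th step. -/
def stepVal {L : ℕ} (s : Fin L → Bool) (j : ℕ) : ℤ :=
  if h : j < L then (if s ⟨j, h⟩ then 1 else -1) else 0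

/-- The height of the path after `i` steps. -/
def pht {L : ℕ} (s : Fin L → Bool) (i : ℕ) : ℤ := ∑ j ∈ Finset.range i, stepVal s j

/-- A Dyck path: stays (weakly) above the `x`-axis and ends at height `0`. -/
def IsDyck {L : ℕ} (s : Fin L → Bool) : Prop :=
  (∀ i ∈ Finset.range (L + 1), 0 ≤ pht s i) ∧ pht s L = 0

/-- The Dyck paths with `L` steps. -/
def dyckPaths (L : ℕ) : Finset (Fin L → Bool) := Finset.univ.filter fun s => IsDyck s

/-- The (indices of the) valleys of a path: a down-step followed by an up-step. -/
def valleys {L : ℕ} (s : Fin L → Bool) : Finset ℕ :=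
  (Finset.Icc 1 (L - 1)).filter fun i => stepVal s (i - 1) = -1 ∧ stepVal s i = 1

/-- The (indices of the) peaks of a path: an up-step followed by a down-step. -/
def peaks {L : ℕ} (s : Fin L → Bool) : Finset ℕ :=
  (Finset.Icc 1 (L - 1)).filter fun i => stepVal s (i - 1) = 1 ∧ stepVal s i = -1

/-- The (indices of the) high peaks of a path: peaks of height at least `2`. -/
def highPeaks {L : ℕ} (s : Fin L → Bool) : Finset ℕ :=
  (peaks s).filter fun i => 2 ≤ pht s i

/-- The height over abscissa `x` of a path starting at `(-m, 0)`. -/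
def aht (m : ℕ) {L : ℕ} (s : Fin L → Bool) (x : ℤ) : ℤ := pht s (x + m).toNat

/-- `D₁ < D₂`, for `D₁` starting at `(-m₁,0)` and `D₂` at `(-m₂,0)`, `m₁ ≤ m₂`:
strictly below on the common range of abscissas. -/
def PathLT (m₁ m₂ : ℕ) {L₁ L₂ : ℕ} (s₁ : Fin L₁ → Bool) (s₂ : Fin L₂ → Bool) : Prop :=
  ∀ x ∈ Finset.Icc (-(m₁ : ℤ)) (m₁ : ℤ), aht m₁ s₁ x < aht m₂ s₂ x

/-- `D₁ ≤ D₂`: weakly below, sharing no step. -/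
def PathLE (m₁ m₂ : ℕ) {L₁ L₂ : ℕ} (s₁ : Fin L₁ → Bool) (s₂ : Fin L₂ → Bool) : Prop :=
  (∀ x ∈ Finset.Icc (-(m₁ : ℤ)) (m₁ : ℤ), aht m₁ s₁ x ≤ aht m₂ s₂ x) ∧
    ∀ x ∈ Finset.Icc (-(m₁ : ℤ)) ((m₁ : ℤ) - 1),
      ¬(aht m₁ s₁ x = aht m₂ s₂ x ∧ aht m₁ s₁ (x + 1) = aht m₂ s₂ (x + 1))

/-- The abscissas of the common lattice points of two paths. -/
def interPts (m₁ m₂ : ℕ) {L₁ L₂ : ℕ} (s₁ : Fin L₁ → Bool) (s₂ : Fin L₂ → Bool) : Finset ℤ :=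
  (Finset.Icc (-(m₁ : ℤ)) (m₁ : ℤ)).filter fun x => aht m₁ s₁ x = aht m₂ s₂ x

/-- `Dyck^k_{2n}`: tuples `(D₁, …, D_k)` with `D_i ∈ Dyck((-n-2i+2,0) → (n+2i-2,0))`
(0-based: `D_i` has half-length `n + 2i`). -/
abbrev DyckTuple (n k : ℕ) := ∀ i : Fin k, Fin (2 * (n + 2 * (i : ℕ))) → Bool

/-- The tuples `(D₁ ≤ D₂ ≤ ⋯ ≤ D_k) ∈ Dyck^k_{2n}`. -/
def weakTuples (n k : ℕ) : Finset (DyckTuple n k) :=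
  Finset.univ.filter fun D =>
    (∀ i : Fin k, IsDyck (D i)) ∧
      ∀ (i : ℕ) (h : i + 1 < k),
        PathLE (n + 2 * i) (n + 2 * (i + 1)) (D ⟨i, by omega⟩) (D ⟨i + 1, h⟩)

/-- The tuples `(D₁ < D₂ < ⋯ < D_k) ∈ Dyck^k_{2n}`. -/
def strictTuples (n k : ℕ) : Finset (DyckTuple n k) :=
  Finset.univ.filter fun D =>
    (∀ i : Fin k, IsDyck (D i)) ∧
      ∀ (i : ℕ) (h : i + 1 < k),
        PathLT (n + 2 * i) (n + 2 * (i + 1)) (D ⟨i, by omega⟩) (D ⟨i + 1, h⟩)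

/-- The lattice points of a path starting at `(-m, 0)`, as a finite subset of `ℤ × ℤ`. -/
def pathPoints (m : ℕ) {L : ℕ} (s : Fin L → Bool) : Finset (ℤ × ℤ) :=
  (Finset.range (L + 1)).image fun t : ℕ => (-(m : ℤ) + (t : ℤ), pht s t)

/-- The non-valley lattice points of a path starting at `(-m, 0)`. -/
def nonValleyPoints (m : ℕ) {L : ℕ} (s : Fin L → Bool) : Finset (ℤ × ℤ) :=
  ((Finset.range (L + 1)).filter fun t => t ∉ valleys s).image
    fun t : ℕ => (-(m : ℤ) + (t : ℤ), pht s t)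

section Weights

variable {F : Type*} [Field F]

/-- The `i`-th lattice point (in `ℤ × ℕ`) of a path starting at `(a, 0)`. -/
def ptOf (a : ℤ) {L : ℕ} (s : Fin L → Bool) (i : ℕ) : ℤ × ℕ := (a + i, (pht s i).toNat)

/-- `wt_V(D) = ∏_{p ∈ D} wt(p) · ∏_{p ∈ V(D)} w̃t(p)` for a path starting at `(a, 0)`. -/
def wtVal (wt wte : ℤ × ℕ → F) (a : ℤ) {L : ℕ} (s : Fin L → Bool) : F :=
  (∏ i ∈ Finset.range (L + 1), wt (ptOf a s i)) * ∏ i ∈ valleys s, wte (ptOf a s i)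

/-- `wt_HP(D) = ∏_{p ∈ D} wt(p) · ∏_{p ∈ HP(D)} w̃t(p)` for a path starting at `(a, 0)`. -/
def wtHigh (wt wte : ℤ × ℕ → F) (a : ℤ) {L : ℕ} (s : Fin L → Bool) : F :=
  (∏ i ∈ Finset.range (L + 1), wt (ptOf a s i)) * ∏ i ∈ highPeaks s, wte (ptOf a s i)

/-- `∏_{p ∈ D₁ ∩ D₂} f(p)`, for `D₁` starting at `(-m₁,0)` and `D₂` at `(-m₂,0)`. -/
def interProd (f : ℤ × ℕ → F) (m₁ m₂ : ℕ) {L₁ L₂ : ℕ}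
    (s₁ : Fin L₁ → Bool) (s₂ : Fin L₂ → Bool) : F :=
  ∏ x ∈ interPts m₁ m₂ s₁ s₂, f (x, (aht m₁ s₁ x).toNat)

/-- The sum over `(D₁ ≤ ⋯ ≤ D_k) ∈ Dyck^k_{2n}` of
`wt_V(D₁)⋯wt_V(D_k) ∏_{i=1}^{k-1} ∏_{p ∈ D_i ∩ D_{i+1}} (1 - w̃t(p)⁻¹)`. -/
def weakSum (wt wte : ℤ × ℕ → F) (n k : ℕ) : F :=
  ∑ D ∈ weakTuples n k,
    (∏ i : Fin k, wtVal wt wte (-(n : ℤ) - 2 * (i : ℕ)) (D i)) *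
      ∏ j : Fin (k - 1),
        interProd (fun p => 1 - (wte p)⁻¹) (n + 2 * (j : ℕ)) (n + 2 * ((j : ℕ) + 1))
          (D ⟨(j : ℕ), by have := j.isLt; omega⟩)
          (D ⟨(j : ℕ) + 1, by have := j.isLt; omega⟩)

/-- The sum over `(D₁ < ⋯ < D_k) ∈ Dyck^k_{2n}` of `wt_V(D₁)⋯wt_V(D_k)`. -/
def strictSum (wt wte : ℤ × ℕ → F) (n k : ℕ) : F :=
  ∑ D ∈ strictTuples n k, ∏ i : Fin k, wtVal wt wte (-(n : ℤ) - 2 * (i : ℕ)) (D i)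

end Weights

/-! ### Schröder paths.

A path with `L` steps is encoded by `st : Fin L → Fin 3`
(`0` = up-step `(1,1)`, `1` = down-step `(1,-1)`, `2` = horizontal step `(2,0)`). -/

/-- The horizontal displacement of the `j`-th step. -/
def stepX {L : ℕ} (st : Fin L → Fin 3) (j : ℕ) : ℕ :=
  if h : j < L then (if st ⟨j, h⟩ = 2 then 2 else 1) else 0

/-- The vertical displacement of the `j`-th step. -/
def stepY {L : ℕ} (st : Fin L → Fin 3) (j : ℕ) : ℤ :=
  if h : j < L then (if st ⟨j, h⟩ = 0 then 1 else if st ⟨j, h⟩ = 1 then -1 else 0) else 0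

/-- The horizontal position (relative to the start) after `j` steps. -/
def xpos {L : ℕ} (st : Fin L → Fin 3) (j : ℕ) : ℕ := ∑ t ∈ Finset.range j, stepX st t

/-- The height after `j` steps. -/
def ypos {L : ℕ} (st : Fin L → Fin 3) (j : ℕ) : ℤ := ∑ t ∈ Finset.range j, stepY st t

/-- A (little) Schröder path of horizontal span `2m`: nonnegative heights, ends at
height `0`, and no horizontal step on the `x`-axis. -/
def IsSch (m : ℕ) {L : ℕ} (st : Fin L → Fin 3) : Prop :=
  xpos st L = 2 * m ∧ (∀ j ∈ Finset.range (L + 1), 0 ≤ ypos st j) ∧ ypos st L = 0 ∧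
    ∀ j ∈ Finset.range L, stepX st j = 2 → ypos st j ≠ 0

/-- The height of a Schröder path over the relative abscissa `x` (midpoints of
horizontal steps get the height of that horizontal step). -/
def schHeight {L : ℕ} (st : Fin L → Fin 3) (x : ℕ) : ℤ :=
  ∑ t ∈ Finset.range L, if xpos st (t + 1) ≤ x then stepY st t else 0

/-- The relative abscissa `x` is the midpoint of a horizontal step. -/
def IsHMid {L : ℕ} (st : Fin L → Fin 3) (x : ℕ) : Prop :=
  ∃ j ∈ Finset.range L, stepX st j = 2 ∧ xpos st j + 1 = x

/-- The number of horizontal steps of a Schröder path. -/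
def hsCount {L : ℕ} (st : Fin L → Fin 3) : ℕ :=
  ((Finset.range L).filter fun j => stepX st j = 2).card

/-- `wt_Sch(c, S) = c^{hs(S)} ∏_{p ∈ S} wt(p)` for a Schröder path starting at `(a,0)`. -/
def wtSch {F : Type*} [Field F] (wt : ℤ × ℕ → F) (c : F) (a : ℤ) {L : ℕ}
    (st : Fin L → Fin 3) : F :=
  c ^ hsCount st * ∏ j ∈ Finset.range (L + 1), wt (a + xpos st j, (ypos st j).toNat)

/-- `φ_V(S) = D`: the Dyck path `D` (with `L'` steps) is obtained from the Schröder
path `S` by replacing each horizontal step by a down-step followed by an up-step. -/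
def PhiVEq {L L' : ℕ} (st : Fin L → Fin 3) (s : Fin L' → Bool) : Prop :=
  ∀ x ∈ Finset.range (L' + 1),
    pht s x = schHeight st x - (if IsHMid st x then 1 else 0)

/-- `φ_HP(S) = D`: the Dyck path `D` is obtained from the Schröder path `S` by
replacing each horizontal step by an up-step followed by a down-step. -/
def PhiHPEq {L L' : ℕ} (st : Fin L → Fin 3) (s : Fin L' → Bool) : Prop :=
  ∀ x ∈ Finset.range (L' + 1),
    pht s x = schHeight st x + (if IsHMid st x then 1 else 0)

/-! ### Young diagrams, excited and pleasant diagrams, reverse plane partitions. -/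

/-- The cells (1-based, matrix coordinates) of the staircase `δ_m = (m-1, m-2, …, 1)`. -/
def deltaCells (m : ℕ) : Finset (ℕ × ℕ) :=
  ((Finset.Icc 1 m) ×ˢ (Finset.Icc 1 m)).filter fun c => c.1 + c.2 ≤ m

/-- An excited move inside the Young diagram `lam`. -/
def ExcitedStep (lam : Finset (ℕ × ℕ)) (D D' : Finset (ℕ × ℕ)) : Prop :=
  ∃ i j : ℕ, (i, j) ∈ D ∧ (i + 1, j) ∉ D ∧ (i, j + 1) ∉ D ∧ (i + 1, j + 1) ∉ D ∧
    (i + 1, j + 1) ∈ lam ∧ D' = insert (i + 1, j + 1) (D.erase (i, j))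

/-- `D` is an excited diagram of `lam/mu`. -/
def IsExcited (lam mu D : Finset (ℕ × ℕ)) : Prop :=
  Relation.ReflTransGen (ExcitedStep lam) mu D

/-- `P` is a pleasant diagram of `lam/mu`: a subset of `lam \ D` for an excited diagram `D`. -/
def IsPleasant (lam mu : Finset (ℕ × ℕ)) (P : Finset (ℕ × ℕ)) : Prop :=
  ∃ D, IsExcited lam mu D ∧ P ⊆ lam \ D

/-- `p(lam/mu)`, the number of pleasant diagrams of `lam/mu`. -/
def pleasantCount (lam mu : Finset (ℕ × ℕ)) : ℕ :=
  Set.ncard {P : Finset (ℕ × ℕ) | IsPleasant lam mu P}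

/-- A reverse plane partition on the skew shape `shape`: a filling by nonnegative
integers (vanishing off the shape) weakly increasing along rows and columns. -/
def IsRPP (shape : Finset (ℕ × ℕ)) (f : ℕ × ℕ → ℕ) : Prop :=
  (∀ c, c ∉ shape → f c = 0) ∧
    (∀ i j : ℕ, (i, j) ∈ shape → (i, j + 1) ∈ shape → f (i, j) ≤ f (i, j + 1)) ∧
    ∀ i j : ℕ, (i, j) ∈ shape → (i + 1, j) ∈ shape → f (i, j) ≤ f (i + 1, j)

/-- `∑_{π ∈ RPP(shape)} q^{|π|}` as a formal power series in `q`. -/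
def rppGF (shape : Finset (ℕ × ℕ)) : PowerSeries ℚ :=
  PowerSeries.mk fun N =>
    (Set.ncard {f : ℕ × ℕ → ℕ | IsRPP shape f ∧ ∑ c ∈ shape, f c = N} : ℚ)

/-- `(q; q)_m = ∏_{i=1}^m (1 - q^i)` as a formal power series. -/
def pochPS (m : ℕ) : PowerSeries ℚ :=
  ∏ i ∈ Finset.Icc 1 m, (1 - (PowerSeries.X : PowerSeries ℚ) ^ i)

/-- `E*_N(q) = ∑_{π ∈ Alt_N} q^{maj(κ_N π⁻¹)}` as a formal power series. -/
def EstarPS (N : ℕ) : PowerSeries ℚ :=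
  ∑ π ∈ altPerms N, (PowerSeries.X : PowerSeries ℚ) ^ majKappaInv N π

/-- `E*_m(q)/(q;q)_m` for `m ≥ 0`, and `0` for `m < 0`. -/
def EstarEntry (m : ℤ) : PowerSeries ℚ :=
  if m < 0 then 0 else EstarPS m.toNat * (pochPS m.toNat)⁻¹

/-- The Gaussian binomial coefficient `[N choose M]_q` as a formal power series. -/
def gaussPS (N M : ℕ) : PowerSeries ℚ :=
  pochPS N * (pochPS M * pochPS (N - M))⁻¹

/-- The finite product `(t; t)_k`. -/
def tPoch {K : Type*} [Field K] (t : K) (k : ℕ) : K := ∏ i ∈ Finset.range k, (1 - t ^ (i + 1))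

theorem tPoch_succ {K : Type*} [Field K] (t : K) (k : ℕ) :
    tPoch t (k + 1) = tPoch t k * (1 - t ^ (k + 1)) := by
  simp [tPoch, Finset.prod_range_succ]

theorem tPoch_ne_zero {K : Type*} [Field K] {t : K} (ht : ∀ k : ℕ, 1 - t ^ (k + 1) ≠ 0) (k : ℕ) :
    tPoch t k ≠ 0 :=
  Finset.prod_ne_zero_iff.2 fun i _ => ht i

/-- The `q`-cosine series `∑ (-1)^m t^{m(m-1)} x^m / (t;t)_{2m}`. -/
def cosSeries {K : Type*} [Field K] (t : K) : PowerSeries K :=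
  PowerSeries.mk fun m => (-1) ^ m * t ^ (m * (m - 1)) / tPoch t (2 * m)

/-- The product `∏_{i=1}^h (1 - t^{2m+2i})`. -/
def evenProd {K : Type*} [Field K] (t : K) (m h : ℕ) : K :=
  ∏ i ∈ Finset.range h, (1 - t ^ (2 * m + 2 * i + 2))

theorem evenProd_succ {K : Type*} [Field K] (t : K) (m h : ℕ) :
    evenProd t m (h + 1) = evenProd t m h * (1 - t ^ (2 * m + 2 * h + 2)) := by
  simp [evenProd, Finset.prod_range_succ]

theorem evenProd_succ' {K : Type*} [Field K] (t : K) (m h : ℕ) :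
    evenProd t m (h + 1) = evenProd t (m + 1) h * (1 - t ^ (2 * m + 2)) := by
  simp only [evenProd, Finset.prod_range_succ']
  congr 1
  refine Finset.prod_congr rfl fun i _ => ?_
  congr 2
  ring

/-- The contiguous family of `q`-sine series; `sinSeries t 0` is the `q`-sine itself. -/
def sinSeries {K : Type*} [Field K] (t : K) (h : ℕ) : PowerSeries K :=
  PowerSeries.mk fun m =>
    (-1) ^ m * t ^ (m * (m + 1)) * evenProd t m h / tPoch t (2 * m + 2 * h + 1)

theorem sinSeries_zero_contiguous {K : Type*} [Field K] {t : K}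
    (ht : ∀ k : ℕ, 1 - t ^ (k + 1) ≠ 0) :
    PowerSeries.C (1 - t) * sinSeries t 0 = cosSeries t + PowerSeries.X * sinSeries t 1 := by
  ext m
  rcases m with _ | m
  · have h0 := ht 0
    simp only [zero_add, pow_one] at h0
    simp [sinSeries, cosSeries, evenProd, tPoch, h0]
  · have h1 := tPoch_ne_zero ht (2 * m + 2)
    have h2 := ht (2 * m + 2)
    simp only [PowerSeries.coeff_C_mul, map_add, PowerSeries.coeff_succ_X_mul, sinSeries,
      cosSeries, PowerSeries.coeff_mk]
    have e1 : tPoch t (2 * (m + 1) + 2 * 0 + 1) = tPoch t (2 * m + 2) * (1 - t ^ (2 * m + 2 + 1)) :=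
      tPoch_succ t (2 * m + 2)
    have e2 : tPoch t (2 * m + 2 * 1 + 1) = tPoch t (2 * m + 2) * (1 - t ^ (2 * m + 2 + 1)) :=
      tPoch_succ t (2 * m + 2)
    have e3 : tPoch t (2 * (m + 1)) = tPoch t (2 * m + 2) := rfl
    rw [e1, e2, e3, Nat.add_sub_cancel]
    simp only [evenProd, Finset.prod_range_zero, Finset.prod_range_one]
    field_simp
    ring

theorem sinSeries_succ_contiguous {K : Type*} [Field K] {t : K}
    (ht : ∀ k : ℕ, 1 - t ^ (k + 1) ≠ 0) (h : ℕ) :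
    (PowerSeries.C (1 - t ^ (2 * h + 3)) + PowerSeries.X) * sinSeries t (h + 1) =
      sinSeries t h + PowerSeries.X * sinSeries t (h + 2) := by
  ext m
  rcases m with _ | m
  · have h1 := tPoch_ne_zero ht (2 * h + 1)
    have h2 := ht (2 * h + 1)
    have h3 := ht (2 * h + 2)
    have e1 : tPoch t (2 * 0 + 2 * (h + 1) + 1) =
        tPoch t (2 * h + 1) * (1 - t ^ (2 * h + 1 + 1)) * (1 - t ^ (2 * h + 2 + 1)) := by
      rw [← tPoch_succ, ← tPoch_succ]; congr 1; ring
    have e2 : tPoch t (2 * 0 + 2 * h + 1) = tPoch t (2 * h + 1) := by simp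
    simp only [add_mul, map_add, PowerSeries.coeff_C_mul, sinSeries, PowerSeries.coeff_mk, e1, e2,
      PowerSeries.coeff_zero_X_mul, evenProd_succ]
    field_simp
    ring_nf
  · have h1 := tPoch_ne_zero ht (2 * m + 2 * h + 3)
    have h2 := ht (2 * m + 2 * h + 3)
    have h3 := ht (2 * m + 2 * h + 4)
    have e1 : tPoch t (2 * (m + 1) + 2 * (h + 1) + 1) = tPoch t (2 * m + 2 * h + 3) *
        (1 - t ^ (2 * m + 2 * h + 3 + 1)) * (1 - t ^ (2 * m + 2 * h + 4 + 1)) := by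
      rw [← tPoch_succ, ← tPoch_succ]; congr 1; ring
    have e2 : tPoch t (2 * (m + 1) + 2 * h + 1) = tPoch t (2 * m + 2 * h + 3) := by
      congr 1; ring
    have e3 : tPoch t (2 * m + 2 * (h + 2) + 1) = tPoch t (2 * m + 2 * h + 3) *
        (1 - t ^ (2 * m + 2 * h + 3 + 1)) * (1 - t ^ (2 * m + 2 * h + 4 + 1)) := by
      rw [← tPoch_succ, ← tPoch_succ]; rfl
    have e4 : tPoch t (2 * m + 2 * (h + 1) + 1) = tPoch t (2 * m + 2 * h + 3) := rfl
    simp only [add_mul, map_add, PowerSeries.coeff_C_mul, sinSeries, PowerSeries.coeff_mk,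
      PowerSeries.coeff_succ_X_mul]
    rw [e1, e2, e3, e4, evenProd_succ' t m (h + 1), evenProd_succ' t m h,
      evenProd_succ t (m + 1) h]
    field_simp
    ring

theorem eq_zero_of_contiguous {K : Type*} [Field K] {t : K}
    (ht : ∀ k : ℕ, 1 - t ^ (k + 1) ≠ 0) (f : ℕ → PowerSeries K)
    (h0 : PowerSeries.C (1 - t) * f 0 = PowerSeries.X * f 1)
    (h1 : ∀ h, (PowerSeries.C (1 - t ^ (2 * h + 3)) + PowerSeries.X) * f (h + 1) =
      f h + PowerSeries.X * f (h + 2)) (h : ℕ) : f h = 0 := by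
  suffices H : ∀ m h, PowerSeries.coeff m (f h) = 0 from PowerSeries.ext fun m => H m h
  intro m
  induction m with
  | zero =>
    intro h
    induction h with
    | zero =>
      have := congrArg (PowerSeries.coeff 0) h0
      rw [PowerSeries.coeff_C_mul, PowerSeries.coeff_zero_X_mul] at this
      have h2 := ht 0
      rw [zero_add, pow_one] at h2
      exact (mul_eq_zero.1 this).resolve_left h2
    | succ h ih =>
      have := congrArg (PowerSeries.coeff 0) (h1 h)
      rw [add_mul, map_add, map_add, PowerSeries.coeff_C_mul, PowerSeries.coeff_zero_X_mul,
        PowerSeries.coeff_zero_X_mul, ih, add_zero, add_zero] at this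
      exact (mul_eq_zero.1 this).resolve_left (ht (2 * h + 2))
  | succ m ihm =>
    intro h
    induction h with
    | zero =>
      have := congrArg (PowerSeries.coeff (m + 1)) h0
      rw [PowerSeries.coeff_C_mul, PowerSeries.coeff_succ_X_mul, ihm] at this
      have h2 := ht 0
      rw [zero_add, pow_one] at h2
      exact (mul_eq_zero.1 this).resolve_left h2
    | succ h ih =>
      have := congrArg (PowerSeries.coeff (m + 1)) (h1 h)
      rw [add_mul, map_add, map_add, PowerSeries.coeff_C_mul, PowerSeries.coeff_succ_X_mul,
        PowerSeries.coeff_succ_X_mul, ih, ihm, ihm, add_zero, add_zero] at this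
      exact (mul_eq_zero.1 this).resolve_left (ht (2 * h + 2))

/-- The unit vertical displacement of an up-step (`true`) or a down-step (`false`). -/
def bitVal (b : Bool) : ℤ := if b then 1 else -1

theorem stepVal_cons_zero {L : ℕ} (b : Bool) (s : Fin L → Bool) :
    stepVal (Fin.cons b s : Fin (L + 1) → Bool) 0 = bitVal b := by
  simp [stepVal, bitVal]

theorem stepVal_cons_succ {L : ℕ} (b : Bool) (s : Fin L → Bool) (j : ℕ) :
    stepVal (Fin.cons b s : Fin (L + 1) → Bool) (j + 1) = stepVal s j := by
  by_cases h : j < L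
  · rw [stepVal, stepVal, dif_pos h, dif_pos (by omega)]
    rfl
  · rw [stepVal, stepVal, dif_neg h, dif_neg (by omega)]

theorem pht_zero {L : ℕ} (s : Fin L → Bool) : pht s 0 = 0 := by simp [pht]

theorem pht_cons_succ {L : ℕ} (b : Bool) (s : Fin L → Bool) (j : ℕ) :
    pht (Fin.cons b s : Fin (L + 1) → Bool) (j + 1) = bitVal b + pht s j := by
  simp only [pht, Finset.sum_range_succ', stepVal_cons_succ, stepVal_cons_zero]
  ring

/-- The step preceding the `i`-th point of a path whose first step is preceded by `b`. -/
def prevStep {L : ℕ} (b : Bool) (s : Fin L → Bool) (i : ℕ) : ℤ :=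
  if i = 0 then bitVal b else stepVal s (i - 1)

theorem prevStep_zero {L : ℕ} (b : Bool) (s : Fin L → Bool) : prevStep b s 0 = bitVal b := by
  simp [prevStep]

theorem prevStep_cons_succ {L : ℕ} (b c : Bool) (s : Fin L → Bool) (i : ℕ) :
    prevStep b (Fin.cons c s : Fin (L + 1) → Bool) (i + 1) = prevStep c s i := by
  rcases i with _ | i
  · simp [prevStep, stepVal_cons_zero]
  · simp [prevStep, stepVal_cons_succ]

/-- The weight `1 / (1 - t^{2h+1})` of a lattice point at height `h`. -/
def pointWt {K : Type*} [Field K] (t : K) (h : ℤ) : K := (1 - t ^ (2 * h + 1))⁻¹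

/-- The extra weight of a point at height `h` between steps `a` and `b`: `t^{2h+1}` at a
high peak. -/
def peakWt {K : Type*} [Field K] (t : K) (a b h : ℤ) : K :=
  if (a = 1 ∧ b = -1) ∧ 2 ≤ h then t ^ (2 * h + 1) else 1

/-- The weight of a path starting at height `h`, whose first step is preceded by `b`. -/
def pathWt {K : Type*} [Field K] (t : K) (b : Bool) (h : ℤ) {L : ℕ} (s : Fin L → Bool) : K :=
  (∏ i ∈ Finset.range L, peakWt t (prevStep b s i) (stepVal s i) (h + pht s i)) *
    ∏ i ∈ Finset.range (L + 1), pointWt t (h + pht s i)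

/-- The weighted count of the nonnegative paths of length `L` from height `h` to height `0`
whose first step is preceded by `b`. -/
def pathSum {K : Type*} [Field K] (t : K) (b : Bool) (h : ℤ) (L : ℕ) : K :=
  ∑ s : Fin L → Bool,
    if (∀ i ∈ Finset.range (L + 1), 0 ≤ h + pht s i) ∧ h + pht s L = 0 then pathWt t b h s else 0

theorem pathSum_zero {K : Type*} [Field K] (t : K) (b : Bool) (h : ℤ) :
    pathSum t b h 0 = if h = 0 then pointWt t 0 else 0 := by
  simp only [pathSum, pathWt]
  simp only [zero_add, range_one, mem_singleton, forall_eq, pht_zero, add_zero, range_zero,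
    prod_empty, prod_singleton, one_mul, univ_unique, sum_const, card_singleton, one_smul]
  by_cases h0 : h = 0
  · simp [h0]
  · simp [h0]

theorem pathWt_cons {K : Type*} [Field K] (t : K) (b c : Bool) (h : ℤ) {L : ℕ}
    (s : Fin L → Bool) :
    pathWt t b h (Fin.cons c s : Fin (L + 1) → Bool) =
      pointWt t h * (peakWt t (bitVal b) (bitVal c) h * pathWt t c (h + bitVal c) s) := by
  simp only [pathWt]
  rw [Finset.prod_range_succ' _ L, Finset.prod_range_succ' _ (L + 1)]
  simp only [prevStep_cons_succ, stepVal_cons_succ, pht_cons_succ, prevStep_zero,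
    stepVal_cons_zero, pht_zero, add_zero, ← add_assoc]
  ring

theorem pathSum_neg {K : Type*} [Field K] (t : K) (b : Bool) {h : ℤ} (hh : h < 0) (L : ℕ) :
    pathSum t b h L = 0 := by
  refine Finset.sum_eq_zero fun s _ => if_neg fun hs => ?_
  have := hs.1 0 (by simp)
  rw [pht_zero] at this
  omega

theorem pathSum_succ {K : Type*} [Field K] (t : K) (b : Bool) {h : ℤ} (hh : 0 ≤ h) (L : ℕ) :
    pathSum t b h (L + 1) = pointWt t h * (pathSum t true (h + 1) L +
      peakWt t (bitVal b) (-1) h * pathSum t false (h - 1) L) := by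
  have key : pathSum t b h (L + 1) = ∑ c : Bool, pointWt t h *
      (peakWt t (bitVal b) (bitVal c) h * pathSum t c (h + bitVal c) L) := by
    rw [pathSum, ← (Fin.consEquiv fun _ => Bool).sum_comp, Fintype.sum_prod_type]
    refine Finset.sum_congr rfl fun c _ => ?_
    rw [pathSum, Finset.mul_sum, Finset.mul_sum]
    refine Finset.sum_congr rfl fun s _ => ?_
    have e : (Fin.consEquiv fun _ : Fin (L + 1) => Bool) (c, s) = Fin.cons c s := rfl
    rw [e, pathWt_cons, pht_cons_succ]
    have hiff : (∀ i ∈ Finset.range (L + 1 + 1),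
        0 ≤ h + pht (Fin.cons c s : Fin (L + 1) → Bool) i) ↔
        ∀ i ∈ Finset.range (L + 1), 0 ≤ h + bitVal c + pht s i := by
      constructor
      · intro H i hi
        have := H (i + 1) (by simpa using hi)
        rwa [pht_cons_succ, ← add_assoc] at this
      · intro H i hi
        rcases i with _ | i
        · simpa [pht_zero] using hh
        · rw [pht_cons_succ, ← add_assoc]
          exact H i (by simpa using hi)
    rw [hiff, ← add_assoc]
    simp only [mul_ite, mul_zero]
    congr
  rw [key, Fintype.sum_bool]
  simp only [bitVal, if_true, Bool.false_eq_true, if_false]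
  have h1 : ∀ a : ℤ, peakWt t a 1 h = 1 := fun a => by simp [peakWt]
  rw [h1, ← sub_eq_add_neg]
  ring

theorem pathSum_eq_zero_of_lt {K : Type*} [Field K] (t : K) (b : Bool) (h : ℤ) (L : ℕ)
    (hL : (L : ℤ) < h) : pathSum t b h L = 0 := by
  induction L generalizing b h with
  | zero => rw [pathSum_zero, if_neg]; push_cast at hL; omega
  | succ L ih =>
    push_cast at hL
    rw [pathSum_succ t b (by omega), ih _ _ (by omega), ih _ _ (by omega)]
    simp

theorem one_sub_zpow_mul_pathSum_succ {K : Type*} [Field K] {t : K}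
    (ht : ∀ k : ℕ, 1 - t ^ (k + 1) ≠ 0) (b : Bool) (h L : ℕ) :
    (1 - t ^ (2 * h + 1)) * pathSum t b h (L + 1) = pathSum t true (h + 1) L +
      peakWt t (bitVal b) (-1) h * pathSum t false (h - 1) L := by
  rw [pathSum_succ t b (by positivity), ← mul_assoc]
  have : (1 - t ^ (2 * h + 1)) * pointWt t h = 1 := by
    have e : (2 * (h : ℤ) + 1) = ((2 * h + 1 : ℕ) : ℤ) := by push_cast; ring
    rw [pointWt, e, zpow_natCast, mul_inv_cancel₀ (ht _)]
  rw [this, one_mul]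

theorem peakWt_false {K : Type*} [Field K] (t : K) (h : ℤ) :
    peakWt t (bitVal false) (-1) h = 1 := by
  simp [peakWt, bitVal]

theorem pathSum_true_one {K : Type*} [Field K] (t : K) (L : ℕ) :
    pathSum t true 1 L = pathSum t false 1 L := by
  rcases L with _ | L
  · simp [pathSum_zero]
  · rw [pathSum_succ t true (by norm_num), pathSum_succ t false (by norm_num)]
    simp [peakWt]

theorem pathSum_true_high {K : Type*} [Field K] {t : K}
    (ht : ∀ k : ℕ, 1 - t ^ (k + 1) ≠ 0) (h L : ℕ) :
    pathSum t true (h + 2 : ℕ) (L + 1) =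
      pathSum t false (h + 2 : ℕ) (L + 1) - pathSum t false (h + 1 : ℕ) L := by
  have h1 := one_sub_zpow_mul_pathSum_succ ht true (h + 2) L
  have h2 := one_sub_zpow_mul_pathSum_succ ht false (h + 2) L
  have hp : peakWt t (bitVal true) (-1) (h + 2 : ℕ) = t ^ (2 * (h + 2) + 1) := by
    have e : (2 * ((h + 2 : ℕ) : ℤ) + 1) = ((2 * (h + 2) + 1 : ℕ) : ℤ) := by push_cast; ring
    rw [peakWt, if_pos, e, zpow_natCast]
    refine ⟨by simp [bitVal], by push_cast; omega⟩
  rw [hp] at h1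
  rw [peakWt_false] at h2
  have e : (((h + 2 : ℕ) : ℤ) - 1) = ((h + 1 : ℕ) : ℤ) := by push_cast; ring
  rw [e] at h1 h2
  apply mul_left_cancel₀ (ht (2 * (h + 2)))
  linear_combination h1 - h2

/-- The generating function, by half the excess length, of the weighted nonnegative paths from
height `h` to height `0`. -/
def pathSeries {K : Type*} [Field K] (t : K) (h : ℕ) : PowerSeries K :=
  PowerSeries.mk fun m => pathSum t false h (h + 2 * m)

theorem pathSeries_zero_contiguous {K : Type*} [Field K] {t : K}
    (ht : ∀ k : ℕ, 1 - t ^ (k + 1) ≠ 0) :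
    PowerSeries.C (1 - t) * pathSeries t 0 = 1 + PowerSeries.X * pathSeries t 1 := by
  ext m
  rcases m with _ | m
  · have h0 := ht 0
    simp only [zero_add, pow_one] at h0
    simp [pathSeries, pathSum_zero, pointWt, h0]
  · have h1 := one_sub_zpow_mul_pathSum_succ ht false 0 (1 + 2 * m)
    have e : (((0 : ℕ) : ℤ) + 1) = 1 := by norm_num
    rw [e, pathSum_true_one, pathSum_neg (h := ((0 : ℕ) : ℤ) - 1) _ _ (by norm_num)] at h1
    simp only [PowerSeries.coeff_C_mul, map_add, PowerSeries.coeff_succ_X_mul, pathSeries,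
      PowerSeries.coeff_mk, PowerSeries.coeff_one]
    have e2 : 0 + 2 * (m + 1) = 1 + 2 * m + 1 := by ring
    rw [e2]
    simpa using h1

theorem pathSeries_succ_contiguous {K : Type*} [Field K] {t : K}
    (ht : ∀ k : ℕ, 1 - t ^ (k + 1) ≠ 0) (h : ℕ) :
    (PowerSeries.C (1 - t ^ (2 * h + 3)) + PowerSeries.X) * pathSeries t (h + 1) =
      pathSeries t h + PowerSeries.X * pathSeries t (h + 2) := by
  have e1 : (((h + 1 : ℕ) : ℤ) + 1) = ((h + 2 : ℕ) : ℤ) := by push_cast; ring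
  have e2 : (((h + 1 : ℕ) : ℤ) - 1) = (h : ℤ) := by push_cast; ring
  ext m
  rcases m with _ | m
  · have h1 := one_sub_zpow_mul_pathSum_succ ht false (h + 1) h
    rw [peakWt_false, e1, e2,
      pathSum_eq_zero_of_lt t true ((h + 2 : ℕ) : ℤ) h (by push_cast; omega)] at h1
    simp only [add_mul, map_add, PowerSeries.coeff_C_mul, pathSeries, PowerSeries.coeff_mk,
      PowerSeries.coeff_zero_X_mul, mul_zero, add_zero]
    rw [zero_add, one_mul] at h1
    exact h1
  · have h1 := one_sub_zpow_mul_pathSum_succ ht false (h + 1) (h + 2 * m + 1 + 1)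
    rw [peakWt_false, e1, e2, pathSum_true_high ht] at h1
    simp only [add_mul, map_add, PowerSeries.coeff_C_mul, pathSeries, PowerSeries.coeff_mk,
      PowerSeries.coeff_succ_X_mul]
    have a1 : h + 1 + 2 * (m + 1) = h + 2 * m + 1 + 1 + 1 := by ring
    have a2 : h + 1 + 2 * m = h + 2 * m + 1 := by ring
    have a3 : h + 2 * (m + 1) = h + 2 * m + 1 + 1 := by ring
    have a4 : h + 2 + 2 * m = h + 2 * m + 1 + 1 := by ring
    rw [a1, a2, a3, a4]
    linear_combination h1

theorem pathSeries_mul_cosSeries {K : Type*} [Field K] {t : K}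
    (ht : ∀ k : ℕ, 1 - t ^ (k + 1) ≠ 0) (h : ℕ) :
    pathSeries t h * cosSeries t = sinSeries t h := by
  refine sub_eq_zero.1 (eq_zero_of_contiguous ht
    (fun h => pathSeries t h * cosSeries t - sinSeries t h) ?_ (fun h => ?_) h)
  · linear_combination cosSeries t * pathSeries_zero_contiguous ht - sinSeries_zero_contiguous ht
  · linear_combination cosSeries t * pathSeries_succ_contiguous ht h -
      sinSeries_succ_contiguous ht h

theorem sum_dyckPaths_eq_pathSum {K : Type*} [Field K] (t : K) (n : ℕ) (ht0 : t ≠ 0) :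
    ∑ s ∈ dyckPaths (2 * n), t ^ (∑ i ∈ highPeaks s, (2 * pht s i + 1)) *
      ∏ i ∈ Finset.range (2 * n + 1), (1 - t ^ (2 * pht s i + 1))⁻¹ =
      pathSum t false 0 (2 * n) := by
  have hz : ∀ (A : Finset ℕ) (f : ℕ → ℤ), t ^ (∑ i ∈ A, f i) = ∏ i ∈ A, t ^ f i := by
    intro A f
    induction A using Finset.induction_on with
    | empty => simp
    | insert a A ha ih => rw [sum_insert ha, prod_insert ha, zpow_add₀ ht0, ih]
  rw [dyckPaths, Finset.sum_filter, pathSum]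
  refine Finset.sum_congr rfl fun s _ => ?_
  simp only [zero_add]
  refine if_congr Iff.rfl ?_ rfl
  simp only [pathWt, zero_add, pointWt]
  congr 1
  rw [hz, highPeaks, peaks, Finset.filter_filter, Finset.prod_filter]
  refine Finset.prod_subset_one_on_sdiff (fun i hi => ?_) (fun i hi => ?_) (fun i hi => ?_)
  · simp only [mem_Icc, mem_range] at *; omega
  · have : i = 0 := by simp only [mem_sdiff, mem_Icc, mem_range] at hi; omega
    subst this
    simp [prevStep_zero, peakWt, bitVal]
  · have : i ≠ 0 := by simp only [mem_Icc] at hi; omega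
    simp only [peakWt, prevStep, if_neg this]

/-- The sum of `q^{a_0 + ⋯ + a_N}` over the sequences with `a_0 = a` and
`r i (a_i) (a_{i+1})` for all `i < N`. -/
def chainSum (q : ENNReal) : ℕ → (ℕ → ℕ → ℕ → Prop) → ℕ → ENNReal
  | 0, _, a => q ^ a
  | N + 1, r, a => q ^ a * ∑' b, if r 0 a b then chainSum q N (fun i => r (i + 1)) b else 0

/-- The sum of `q^{a_0 + ⋯ + a_N}` over the sequences with `r i (a_i) (a_{i+1})` for all
`i < N`. -/
def chainTotal (q : ENNReal) (N : ℕ) (r : ℕ → ℕ → ℕ → Prop) : ENNReal := ∑' a, chainSum q N r a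

theorem chainSum_succ (q : ENNReal) (N : ℕ) (r : ℕ → ℕ → ℕ → Prop) (a : ℕ) :
    chainSum q (N + 1) r a =
      q ^ a * ∑' b, if r 0 a b then chainSum q N (fun i => r (i + 1)) b else 0 := rfl

theorem chainSum_congr (q : ENNReal) {N : ℕ} {r r' : ℕ → ℕ → ℕ → Prop}
    (h : ∀ i < N, ∀ a b, r i a b ↔ r' i a b) (a : ℕ) : chainSum q N r a = chainSum q N r' a := by
  induction N generalizing r r' a with
  | zero => rfl
  | succ N ih =>
    simp only [chainSum]
    congr 1
    refine tsum_congr fun b => if_congr (h 0 (by omega) a b) (ih (fun i hi => ?_) b) rfl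
    exact h (i + 1) (by omega)

theorem chainTotal_congr (q : ENNReal) {N : ℕ} {r r' : ℕ → ℕ → ℕ → Prop}
    (h : ∀ i < N, ∀ a b, r i a b ↔ r' i a b) : chainTotal q N r = chainTotal q N r' :=
  tsum_congr fun a => chainSum_congr q h a

theorem chainSum_add_chainSum (q : ENNReal) (M p : ℕ) {r r' : ℕ → ℕ → ℕ → Prop}
    (hr : ∀ i, i ≠ p → r i = r' i) (hp : ∀ a b, r' p a b ↔ ¬ r p a b) (a : ℕ) :
    chainSum q (M + (p + 1)) r a + chainSum q (M + (p + 1)) r' a =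
      chainSum q p r a * chainTotal q M (fun i => r (i + (p + 1))) := by
  induction p generalizing r r' a with
  | zero =>
    have e : (fun i => r' (i + 1)) = fun i => r (i + 1) := by
      funext i
      exact (hr (i + 1) (by omega)).symm
    simp only [zero_add, chainSum, e, ← mul_add, ← ENNReal.tsum_add, chainTotal]
    congr 1
    refine tsum_congr fun b => ?_
    by_cases hb : r 0 a b <;> simp [hp, hb]
  | succ p ih =>
    have e0 := hr 0 (by omega)
    have key := ih (r := fun i => r (i + 1)) (r' := fun i => r' (i + 1))
      (fun i hi => hr (i + 1) (by omega)) hp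
    simp only [← add_assoc] at key ⊢
    rw [chainSum_succ, chainSum_succ, chainSum_succ, ← e0]
    simp only [← mul_add, ← ENNReal.tsum_add, mul_assoc, ← ENNReal.tsum_mul_right]
    congr 1
    refine tsum_congr fun b => ?_
    by_cases hb : r 0 a b
    · simp only [hb, if_true]
      rw [key]
    · simp [hb]

theorem chainTotal_add_chainTotal (q : ENNReal) (M p : ℕ) {r r' : ℕ → ℕ → ℕ → Prop}
    (hr : ∀ i, i ≠ p → r i = r' i) (hp : ∀ a b, r' p a b ↔ ¬ r p a b) :
    chainTotal q (M + (p + 1)) r + chainTotal q (M + (p + 1)) r' =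
      chainTotal q p r * chainTotal q M (fun i => r (i + (p + 1))) := by
  rw [chainTotal, chainTotal, ← ENNReal.tsum_add]
  simp only [chainSum_add_chainSum q M p hr hp]
  rw [ENNReal.tsum_mul_right, ← chainTotal]

theorem tsum_ite_le_pow (x : ENNReal) (k : ℕ) :
    (∑' a, if k ≤ a then x ^ a else 0) = x ^ k * (1 - x)⁻¹ := by
  rw [← ENNReal.tsum_geometric, ← ENNReal.tsum_mul_left,
    ← (add_right_injective k).tsum_eq (f := fun a => if k ≤ a then x ^ a else 0)]
  · exact tsum_congr fun d => by simp [pow_add]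
  · intro a ha
    by_cases h : k ≤ a
    · exact ⟨a - k, by simp; omega⟩
    · simp [h] at ha

theorem tsum_pow_mul_chainSum_of_decreasing (q : ENNReal) (N : ℕ) (δ : ℕ → ℕ) (c : ℕ) :
    ∑' a, q ^ (c * a) * chainSum q N (fun i a b => b + δ i ≤ a) a =
      q ^ (∑ i ∈ Finset.range N, (c + 1 + i) * δ i) *
        ∏ i ∈ Finset.range (N + 1), (1 - q ^ (c + 1 + i))⁻¹ := by
  induction N generalizing δ c with
  | zero =>
    simp only [chainSum, range_zero, sum_empty, pow_zero, one_mul, zero_add, range_one,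
      prod_singleton, add_zero]
    rw [← ENNReal.tsum_geometric]
    exact tsum_congr fun a => by rw [← pow_mul, ← pow_add]; congr 1; ring
  | succ N ih =>
    simp only [chainSum]
    have h1 : ∀ a, q ^ (c * a) * (q ^ a * ∑' b, if b + δ 0 ≤ a then
        chainSum q N (fun i a b => b + δ (i + 1) ≤ a) b else 0) =
        ∑' b, (if b + δ 0 ≤ a then (q ^ (c + 1)) ^ a else 0) *
          chainSum q N (fun i a b => b + δ (i + 1) ≤ a) b := by
      intro a
      rw [← mul_assoc, ← ENNReal.tsum_mul_left]
      refine tsum_congr fun b => ?_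
      by_cases h : b + δ 0 ≤ a
      · simp only [h, if_true, ← pow_mul, ← pow_add]
        congr 2
        ring
      · simp [h]
    simp only [h1]
    rw [ENNReal.tsum_comm]
    simp only [ENNReal.tsum_mul_right, tsum_ite_le_pow]
    have h2 : ∀ b, (q ^ (c + 1)) ^ (b + δ 0) * (1 - q ^ (c + 1))⁻¹ *
        chainSum q N (fun i a b => b + δ (i + 1) ≤ a) b =
        q ^ ((c + 1) * δ 0) * (1 - q ^ (c + 1))⁻¹ *
          (q ^ ((c + 1) * b) * chainSum q N (fun i a b => b + δ (i + 1) ≤ a) b) := by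
      intro b
      rw [pow_add, ← pow_mul, ← pow_mul]
      ring
    simp only [h2]
    rw [ENNReal.tsum_mul_left, ih (fun i => δ (i + 1)) (c + 1), Finset.sum_range_succ',
      Finset.prod_range_succ' _ (N + 1), pow_add]
    have h3 : ∀ i, c + 1 + 1 + i = c + 1 + (i + 1) := fun i => by ring
    simp only [h3, add_zero]
    ring

theorem chainTotal_of_decreasing (q : ENNReal) (N : ℕ) (δ : ℕ → ℕ) :
    chainTotal q N (fun i a b => b + δ i ≤ a) =
      q ^ (∑ i ∈ Finset.range N, (i + 1) * δ i) *
        ∏ i ∈ Finset.range (N + 1), (1 - q ^ (i + 1))⁻¹ := by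
  have := tsum_pow_mul_chainSum_of_decreasing q N δ 0
  simp only [zero_mul, pow_zero, one_mul, zero_add, add_comm 1] at this
  exact this

theorem chainSum_eq_tsum_cons (q : ENNReal) (N : ℕ) (r : ℕ → ℕ → ℕ → Prop) (a : ℕ) :
    chainSum q N r a = ∑' f : Fin N → ℕ,
      if ∀ i : Fin N, r i ((Fin.cons a f : Fin (N + 1) → ℕ) i.castSucc)
        ((Fin.cons a f : Fin (N + 1) → ℕ) i.succ)
      then q ^ (a + ∑ i, f i) else 0 := by
  induction N generalizing r a with
  | zero => simp [chainSum]
  | succ N ih =>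
    rw [chainSum, ← (Fin.consEquiv fun _ => ℕ).tsum_eq, ENNReal.tsum_prod',
      ← ENNReal.tsum_mul_left]
    refine tsum_congr fun b => ?_
    rw [ih]
    by_cases h : r 0 a b
    · rw [if_pos h, ← ENNReal.tsum_mul_left]
      refine tsum_congr fun f => ?_
      have e : (Fin.consEquiv fun _ : Fin (N + 1) => ℕ) (b, f) = Fin.cons b f := rfl
      rw [e, mul_ite, mul_zero, ← pow_add, Fin.sum_univ_succ]
      refine if_congr ?_ (by simp) rfl
      rw [Fin.forall_fin_succ (n := N)]
      simp [h]
    · rw [if_neg h, mul_zero, eq_comm, ENNReal.tsum_eq_zero]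
      intro f
      exact if_neg fun H => h (by simpa [Fin.consEquiv] using H 0)

theorem chainTotal_eq_tsum (q : ENNReal) (N : ℕ) (r : ℕ → ℕ → ℕ → Prop) :
    chainTotal q N r = ∑' f : Fin (N + 1) → ℕ,
      if ∀ i : Fin N, r i (f i.castSucc) (f i.succ) then q ^ (∑ i, f i) else 0 := by
  rw [← (Fin.consEquiv fun _ => ℕ).tsum_eq, ENNReal.tsum_prod', chainTotal]
  refine tsum_congr fun a => ?_
  rw [chainSum_eq_tsum_cons]
  refine tsum_congr fun f => ?_
  have e : (Fin.consEquiv fun _ : Fin (N + 1) => ℕ) (a, f) = Fin.cons a f := rfl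
  rw [e, Fin.sum_univ_succ]
  simp

theorem kappaNat_injOn {n i j : ℕ} (hi : i < 2 * n + 1) (hj : j < 2 * n + 1)
    (h : kappaNat (2 * n + 1) (i + 1) = kappaNat (2 * n + 1) (j + 1)) : i = j := by
  unfold kappaNat at h
  split_ifs at h <;> omega

theorem kappaNat_lt_of_adjacent {n i j : ℕ} (hj : j < 2 * n + 1) (hi : i < 2 * n + 1)
    (h0 : i % 2 = 0) (hij : j = i + 1 ∨ i = j + 1) :
    kappaNat (2 * n + 1) (i + 1) < kappaNat (2 * n + 1) (j + 1) := by
  unfold kappaNat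
  split_ifs <;> omega

theorem word_add_one {N : ℕ} (σ : Equiv.Perm (Fin N)) {i : ℕ} (hi : i < N) :
    word σ (i + 1) = (σ ⟨i, hi⟩ : ℕ) + 1 := by
  rw [word, dif_pos ⟨by omega, by omega⟩]
  rfl

/-- The key by which positions are sorted: decreasing entries, ties broken by increasing label. -/
def labelKey {N : ℕ} (f : Fin N → ℕ) (i : Fin N) : Lex (ℕᵒᵈ × ℕ) :=
  toLex (OrderDual.toDual (f i), kappaNat N (i + 1))

theorem labelKey_lt_iff {N : ℕ} (f : Fin N → ℕ) (i j : Fin N) :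
    labelKey f i < labelKey f j ↔
      f j < f i ∨ f i = f j ∧ kappaNat N (i + 1) < kappaNat N (j + 1) := by
  rw [labelKey, labelKey, Prod.Lex.toLex_lt_toLex]
  simp

theorem labelKey_injective {n : ℕ} (f : Fin (2 * n + 1) → ℕ) :
    Function.Injective (labelKey f) := by
  intro i j h
  have h1 : kappaNat (2 * n + 1) (i + 1) = kappaNat (2 * n + 1) (j + 1) :=
    congrArg (fun p => (ofLex p).2) h
  exact Fin.ext (kappaNat_injOn i.2 j.2 h1)

theorem eq_sort_iff_strictMono {N : ℕ} {α : Type*} [LinearOrder α] {g : Fin N → α}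
    (hg : Function.Injective g) (σ : Equiv.Perm (Fin N)) :
    σ = Tuple.sort g ↔ StrictMono (g ∘ σ) := by
  rw [Tuple.eq_sort_iff]
  constructor
  · rintro ⟨h, -⟩
    exact h.strictMono_of_injective (hg.comp σ.injective)
  · intro h
    refine ⟨h.monotone, fun i j hij e => ?_⟩
    exact absurd (σ.injective (hg e)) hij.ne

/-- The indicator of a descent of the word `κ σ` at position `i + 1`. -/
def labelDesc {N : ℕ} (σ : Equiv.Perm (Fin N)) (i : ℕ) : ℕ :=
  if kappaNat N (word σ (i + 1 + 1)) < kappaNat N (word σ (i + 1)) then 1 else 0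

theorem majKappaInv_eq_sum {N : ℕ} (π : Equiv.Perm (Fin (N + 1))) :
    majKappaInv (N + 1) π = ∑ i ∈ Finset.range N, (i + 1) * labelDesc π.symm i := by
  rw [majKappaInv, majW, Nat.add_sub_cancel, ← Finset.Ico_add_one_right_eq_Icc,
    Finset.sum_Ico_eq_sum_range, Nat.add_sub_cancel]
  refine Finset.sum_congr rfl fun i _ => ?_
  rw [labelDesc, add_comm 1 i]
  split_ifs <;> simp

theorem strictMono_labelKey_iff {n : ℕ} (f : Fin (2 * n + 1) → ℕ)
    (σ : Equiv.Perm (Fin (2 * n + 1))) :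
    StrictMono (labelKey f ∘ σ) ↔
      ∀ i : Fin (2 * n), f (σ i.succ) + labelDesc σ i ≤ f (σ i.castSucc) := by
  rw [Fin.strictMono_iff_lt_succ]
  refine forall_congr' fun i => ?_
  have w1 : word σ (i + 1 + 1) = (σ i.succ : ℕ) + 1 := word_add_one σ (i := i + 1) (by omega)
  have w2 : word σ (i + 1) = (σ i.castSucc : ℕ) + 1 := word_add_one σ (i := i) (by omega)
  have hne : kappaNat (2 * n + 1) (σ i.castSucc + 1) ≠ kappaNat (2 * n + 1) (σ i.succ + 1) := by
    intro h
    have := σ.injective (Fin.ext (kappaNat_injOn (σ i.castSucc).2 (σ i.succ).2 h))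
    exact absurd this (Fin.castSucc_lt_succ).ne
  rw [Function.comp_apply, Function.comp_apply, labelKey_lt_iff, labelDesc, w1, w2]
  split_ifs <;> omega

/-- The relations of a zigzag `a_0 ≥ a_1 ≤ a_2 ≥ a_3 ≤ ⋯`, in which the first `j` relations `≤`
are replaced by `>`. -/
def zigzagRel (j i a b : ℕ) : Prop :=
  if i % 2 = 0 then b ≤ a else if i < 2 * j then b < a else a ≤ b

theorem isAltW_iff_zigzag {n : ℕ} (π : Equiv.Perm (Fin (2 * n + 1))) (f : Fin (2 * n + 1) → ℕ)
    (h : StrictMono (labelKey f ∘ π.symm)) :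
    IsAltW (2 * n + 1) (word π) ↔ ∀ i : Fin (2 * n), zigzagRel 0 i (f i.castSucc) (f i.succ) := by
  have key : ∀ x y : Fin (2 * n + 1), (x : ℕ) % 2 = 0 → (y : ℕ) = x + 1 ∨ (x : ℕ) = y + 1 →
      ((π x : ℕ) < π y ↔ f y ≤ f x) := by
    intro x y hx hxy
    have h1 := h.lt_iff_lt (a := π x) (b := π y)
    have h2 := kappaNat_lt_of_adjacent y.2 x.2 hx hxy
    rw [Function.comp_apply, Function.comp_apply, π.symm_apply_apply, π.symm_apply_apply,
      labelKey_lt_iff] at h1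
    rw [← Fin.lt_def, ← h1]
    omega
  have step : ∀ i : Fin (2 * n), ((((i : ℕ) + 1) % 2 = 1 → word π (i + 1) < word π (i + 1 + 1)) ∧
      (((i : ℕ) + 1) % 2 = 0 → word π (i + 1 + 1) < word π (i + 1))) ↔
      zigzagRel 0 i (f i.castSucc) (f i.succ) := by
    intro i
    have w1 : word π (i + 1 + 1) = (π i.succ : ℕ) + 1 := word_add_one π (i := i + 1) (by omega)
    have w2 : word π (i + 1) = (π i.castSucc : ℕ) + 1 := word_add_one π (i := i) (by omega)
    rw [w1, w2, zigzagRel]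
    by_cases hi : (i : ℕ) % 2 = 0
    · have := key i.castSucc i.succ (by simpa using hi) (by simp)
      rw [if_pos hi, ← this]
      omega
    · have := key i.succ i.castSucc (by rw [Fin.val_succ]; omega) (by simp)
      rw [if_neg hi, if_neg (by omega), ← this]
      omega
  rw [IsAltW]
  constructor
  · intro H i
    exact (step i).1 (H (i + 1) (by simp))
  · intro H i hi
    simp only [Nat.add_sub_cancel, mem_Icc] at hi
    have := (step ⟨i - 1, by omega⟩).2 (H _)
    simpa only [Nat.sub_add_cancel hi.1] using this

theorem chainTotal_zigzagRel_zero (q : ENNReal) (n : ℕ) :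
    chainTotal q (2 * n) (zigzagRel 0) =
      (∑ π ∈ altPerms (2 * n + 1), q ^ majKappaInv (2 * n + 1) π) *
        ∏ i ∈ Finset.range (2 * n + 1), (1 - q ^ (i + 1))⁻¹ := by
  rw [chainTotal_eq_tsum]
  have h1 : ∀ f : Fin (2 * n + 1) → ℕ,
      (if ∀ i : Fin (2 * n), zigzagRel 0 i (f i.castSucc) (f i.succ)
        then q ^ (∑ i, f i) else 0) =
      ∑ π ∈ altPerms (2 * n + 1),
        if StrictMono (labelKey f ∘ π.symm) then q ^ (∑ i, f i) else 0 := by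
    intro f
    have h2 : ∀ π : Equiv.Perm (Fin (2 * n + 1)),
        StrictMono (labelKey f ∘ π.symm) ↔ (Tuple.sort (labelKey f)).symm = π := by
      intro π
      rw [← eq_sort_iff_strictMono (labelKey_injective f)]
      exact ⟨fun e => by rw [← e, Equiv.symm_symm], fun e => by rw [← e, Equiv.symm_symm]⟩
    have h3 := isAltW_iff_zigzag _ f ((h2 _).2 rfl)
    simp only [h2, Finset.sum_ite_eq, altPerms, mem_filter, mem_univ, true_and, h3]
  simp only [h1]
  rw [Summable.tsum_finsetSum fun _ _ => ENNReal.summable, Finset.sum_mul]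
  refine Finset.sum_congr rfl fun π _ => ?_
  rw [majKappaInv_eq_sum, ← chainTotal_of_decreasing, chainTotal_eq_tsum,
    ← (Equiv.arrowCongr π.symm (Equiv.refl ℕ)).tsum_eq]
  refine tsum_congr fun f => ?_
  have hs : ∑ i, (Equiv.arrowCongr π.symm (Equiv.refl ℕ)) f i = ∑ i, f i := Equiv.sum_comp π f
  rw [hs]
  have hiff : StrictMono (labelKey ((Equiv.arrowCongr π.symm (Equiv.refl ℕ)) f) ∘ π.symm) ↔
      ∀ i : Fin (2 * n), f i.succ + labelDesc π.symm i ≤ f i.castSucc := by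
    rw [strictMono_labelKey_iff]
    simp
  by_cases hc : ∀ i : Fin (2 * n), f i.succ + labelDesc π.symm i ≤ f i.castSucc
  · rw [if_pos (hiff.2 hc), if_pos hc]
  · rw [if_neg (hiff.not.2 hc), if_neg hc]


theorem sum_range_succ_mul_mod_two (j : ℕ) :
    ∑ i ∈ Finset.range (2 * j), (i + 1) * (i % 2) = j * (j + 1) := by
  induction j with
  | zero => simp
  | succ j ih =>
    rw [show 2 * (j + 1) = 2 * j + 1 + 1 by ring, Finset.sum_range_succ, Finset.sum_range_succ, ih,
      show (2 * j) % 2 = 0 by omega, show (2 * j + 1) % 2 = 1 by omega]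
    ring

theorem zigzagRel_iff_add_mod_two_le {j i : ℕ} (hi : i < 2 * j + 1) (a b : ℕ) :
    zigzagRel j i a b ↔ b + i % 2 ≤ a := by
  rw [zigzagRel]
  split_ifs <;> omega

theorem chainTotal_zigzagRel_self (q : ENNReal) (n : ℕ) :
    chainTotal q (2 * n) (zigzagRel n) =
      q ^ (n * (n + 1)) * ∏ i ∈ Finset.range (2 * n + 1), (1 - q ^ (i + 1))⁻¹ := by
  rw [chainTotal_congr q fun i hi a b => zigzagRel_iff_add_mod_two_le (j := n) (by omega) a b,
    chainTotal_of_decreasing, sum_range_succ_mul_mod_two]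

theorem chainTotal_zigzagRel_add (q : ENNReal) (m j : ℕ) :
    chainTotal q (2 * (m + j + 1)) (zigzagRel j) +
        chainTotal q (2 * (m + j + 1)) (zigzagRel (j + 1)) =
      q ^ (j * (j + 1)) * (∏ i ∈ Finset.range (2 * j + 2), (1 - q ^ (i + 1))⁻¹) *
        chainTotal q (2 * m) (zigzagRel 0) := by
  have hr : ∀ i, i ≠ 2 * j + 1 → zigzagRel j i = zigzagRel (j + 1) i := by
    intro i hi
    funext a b
    rw [zigzagRel, zigzagRel]
    split_ifs <;> first | rfl | omega
  have hp : ∀ a b, zigzagRel (j + 1) (2 * j + 1) a b ↔ ¬ zigzagRel j (2 * j + 1) a b := by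
    intro a b
    rw [zigzagRel, zigzagRel]
    split_ifs <;> omega
  rw [show 2 * (m + j + 1) = 2 * m + (2 * j + 1 + 1) by ring,
    chainTotal_add_chainTotal q (2 * m) (2 * j + 1) hr hp,
    chainTotal_congr q fun i hi a b => zigzagRel_iff_add_mod_two_le (j := j) hi a b,
    chainTotal_of_decreasing, Finset.sum_range_succ, sum_range_succ_mul_mod_two,
    show (2 * j) % 2 = 0 by omega, mul_zero, add_zero]
  congr 1
  refine chainTotal_congr q fun i _ a b => ?_
  rw [zigzagRel, zigzagRel]
  split_ifs <;> omega

theorem tPoch_pos {t : ℝ} (h0 : 0 < t) (h1 : t < 1) (k : ℕ) : 0 < tPoch t k :=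
  Finset.prod_pos fun _ _ => sub_pos.2 (pow_lt_one₀ h0.le h1 (Nat.succ_ne_zero _))

theorem prod_one_sub_inv_eq_ofReal {t : ℝ} (h0 : 0 < t) (h1 : t < 1) (k : ℕ) :
    ∏ i ∈ Finset.range k, (1 - ENNReal.ofReal t ^ (i + 1))⁻¹ = ENNReal.ofReal (tPoch t k)⁻¹ := by
  have hpos : ∀ i : ℕ, 0 < 1 - t ^ (i + 1) := fun i =>
    sub_pos.2 (pow_lt_one₀ h0.le h1 (Nat.succ_ne_zero _))
  rw [tPoch, ← Finset.prod_inv_distrib,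
    ENNReal.ofReal_prod_of_nonneg fun i _ => (inv_pos.2 (hpos i)).le]
  refine Finset.prod_congr rfl fun i _ => ?_
  rw [ENNReal.ofReal_inv_of_pos (hpos i), ENNReal.ofReal_sub _ (pow_nonneg h0.le _),
    ENNReal.ofReal_one, ENNReal.ofReal_pow h0.le]

/-- The normalized generating function `E*_{2n+1}(t) / (t;t)_{2n+1}`. -/
def altSeriesCoeff {K : Type*} [Field K] (t : K) (n : ℕ) : K :=
  (∑ π ∈ altPerms (2 * n + 1), t ^ majKappaInv (2 * n + 1) π) / tPoch t (2 * n + 1)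

theorem toReal_chainTotal_zigzagRel_zero {t : ℝ} (h0 : 0 < t) (h1 : t < 1) (n : ℕ) :
    (chainTotal (ENNReal.ofReal t) (2 * n) (zigzagRel 0)).toReal = altSeriesCoeff t n := by
  rw [chainTotal_zigzagRel_zero, prod_one_sub_inv_eq_ofReal h0 h1, ENNReal.toReal_mul,
    ENNReal.toReal_ofReal (inv_pos.2 (tPoch_pos h0 h1 _)).le,
    ENNReal.toReal_sum fun _ _ => ENNReal.pow_ne_top ENNReal.ofReal_ne_top]
  simp only [ENNReal.toReal_pow, ENNReal.toReal_ofReal h0.le]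
  rw [altSeriesCoeff, div_eq_mul_inv]

theorem toReal_chainTotal_zigzagRel_self {t : ℝ} (h0 : 0 < t) (h1 : t < 1) (n : ℕ) :
    (chainTotal (ENNReal.ofReal t) (2 * n) (zigzagRel n)).toReal =
      t ^ (n * (n + 1)) / tPoch t (2 * n + 1) := by
  rw [chainTotal_zigzagRel_self, prod_one_sub_inv_eq_ofReal h0 h1, ENNReal.toReal_mul,
    ENNReal.toReal_ofReal (inv_pos.2 (tPoch_pos h0 h1 _)).le, ENNReal.toReal_pow,
    ENNReal.toReal_ofReal h0.le, div_eq_mul_inv]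

theorem toReal_chainTotal_zigzagRel_add {t : ℝ} (h0 : 0 < t) (h1 : t < 1) (m j : ℕ) :
    (chainTotal (ENNReal.ofReal t) (2 * (m + j + 1)) (zigzagRel j)).toReal +
        (chainTotal (ENNReal.ofReal t) (2 * (m + j + 1)) (zigzagRel (j + 1))).toReal =
      t ^ (j * (j + 1)) / tPoch t (2 * j + 2) * altSeriesCoeff t m := by
  have h := chainTotal_zigzagRel_add (ENNReal.ofReal t) m j
  have htop : ENNReal.ofReal t ^ (j * (j + 1)) *
      (∏ i ∈ Finset.range (2 * j + 2), (1 - ENNReal.ofReal t ^ (i + 1))⁻¹) *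
        chainTotal (ENNReal.ofReal t) (2 * m) (zigzagRel 0) ≠ ⊤ := by
    rw [chainTotal_zigzagRel_zero, prod_one_sub_inv_eq_ofReal h0 h1,
      prod_one_sub_inv_eq_ofReal h0 h1]
    have hp : ∀ k, ENNReal.ofReal t ^ k ≠ ⊤ := fun k => ENNReal.pow_ne_top ENNReal.ofReal_ne_top
    exact ENNReal.mul_ne_top (ENNReal.mul_ne_top (hp _) ENNReal.ofReal_ne_top)
      (ENNReal.mul_ne_top (ENNReal.sum_ne_top.2 fun _ _ => hp _) ENNReal.ofReal_ne_top)
  rw [← h, ENNReal.add_ne_top] at htop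
  rw [← ENNReal.toReal_add htop.1 htop.2, h, ENNReal.toReal_mul, ENNReal.toReal_mul,
    toReal_chainTotal_zigzagRel_zero h0 h1, prod_one_sub_inv_eq_ofReal h0 h1,
    ENNReal.toReal_ofReal (inv_pos.2 (tPoch_pos h0 h1 _)).le, ENNReal.toReal_pow,
    ENNReal.toReal_ofReal h0.le, div_eq_mul_inv]

theorem sum_range_alternating_add {R : Type*} [CommRing R] (x : ℕ → R) (n : ℕ) :
    ∑ j ∈ Finset.range n, (-1) ^ (j + 1) * (x j + x (j + 1)) = (-1) ^ n * x n - x 0 := by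
  induction n with
  | zero => simp
  | succ n ih =>
    rw [Finset.sum_range_succ, ih]
    ring

theorem cosSeries_mul_mk_altSeriesCoeff {t : ℝ} (h0 : 0 < t) (h1 : t < 1) :
    cosSeries t * PowerSeries.mk (altSeriesCoeff t) = sinSeries t 0 := by
  ext n
  rw [PowerSeries.coeff_mul, Finset.Nat.sum_antidiagonal_eq_sum_range_succ_mk,
    Finset.sum_range_succ']
  have hx := sum_range_alternating_add
    (fun j => (chainTotal (ENNReal.ofReal t) (2 * n) (zigzagRel j)).toReal) n
  simp only [toReal_chainTotal_zigzagRel_self h0 h1, toReal_chainTotal_zigzagRel_zero h0 h1] at hx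
  have hsum : ∑ k ∈ Finset.range n, PowerSeries.coeff (k + 1) (cosSeries t) *
        PowerSeries.coeff (n - (k + 1)) (PowerSeries.mk (altSeriesCoeff t)) =
      ∑ j ∈ Finset.range n, (-1) ^ (j + 1) *
        ((chainTotal (ENNReal.ofReal t) (2 * n) (zigzagRel j)).toReal +
          (chainTotal (ENNReal.ofReal t) (2 * n) (zigzagRel (j + 1))).toReal) := by
    refine Finset.sum_congr rfl fun j hj => ?_
    obtain ⟨m, rfl⟩ : ∃ m, n = m + j + 1 := ⟨n - (j + 1), by rw [mem_range] at hj; omega⟩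
    rw [toReal_chainTotal_zigzagRel_add h0 h1, cosSeries, PowerSeries.coeff_mk,
      PowerSeries.coeff_mk, show m + j + 1 - (j + 1) = m by omega, Nat.add_sub_cancel,
      mul_comm (j + 1) j, show 2 * (j + 1) = 2 * j + 2 by ring]
    ring
  rw [hsum, hx, sinSeries, PowerSeries.coeff_mk, cosSeries, PowerSeries.coeff_mk,
    PowerSeries.coeff_mk]
  simp only [evenProd, tPoch, Finset.prod_range_zero, Nat.sub_zero, mul_zero, pow_zero, zero_mul,
    add_zero]
  ring

theorem cosSeries_ne_zero {K : Type*} [Field K] (t : K) : cosSeries t ≠ 0 := by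
  intro h
  have := congrArg (PowerSeries.coeff 0) h
  simp [cosSeries, tPoch] at this

theorem altSeriesCoeff_eq_pathSum {t : ℝ} (h0 : 0 < t) (h1 : t < 1) (n : ℕ) :
    altSeriesCoeff t n = pathSum t false 0 (2 * n) := by
  have ht : ∀ k : ℕ, 1 - t ^ (k + 1) ≠ 0 := fun k =>
    (sub_pos.2 (pow_lt_one₀ h0.le h1 (Nat.succ_ne_zero _))).ne'
  have h : PowerSeries.mk (altSeriesCoeff t) = pathSeries t 0 := by
    refine mul_left_cancel₀ (cosSeries_ne_zero t) ?_
    rw [cosSeries_mul_mk_altSeriesCoeff h0 h1, mul_comm, pathSeries_mul_cosSeries ht]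
  have := congrArg (PowerSeries.coeff n) h
  rwa [PowerSeries.coeff_mk, pathSeries, PowerSeries.coeff_mk, zero_add] at this

theorem exists_transcendental_mem_Ioo :
    ∃ t ∈ Set.Ioo (0 : ℝ) 1, Transcendental ℚ t := by
  by_contra! h
  have hc : (Set.Ioo (0 : ℝ) 1).Countable :=
    (Algebraic.countable ℚ ℝ).mono fun t ht => not_not.1 (h t ht)
  exact absurd (Cardinal.Real.Ioo_countable_iff.1 hc) (by norm_num)

theorem prod_Icc_one_sub_pow {K : Type*} [Field K] (t : K) (k : ℕ) :
    ∏ i ∈ Finset.Icc 1 k, (1 - t ^ i) = tPoch t k := by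
  rw [← Finset.Ico_add_one_right_eq_Icc, Finset.prod_Ico_eq_prod_range, Nat.add_sub_cancel]
  simp only [add_comm 1, tPoch]

theorem statement_1 (n : ℕ) :
    (∑ π ∈ altPerms (2 * n + 1), (RatFunc.X : RatFunc ℚ) ^ majKappaInv (2 * n + 1) π) /
        ∏ i ∈ Finset.Icc 1 (2 * n + 1), (1 - (RatFunc.X : RatFunc ℚ) ^ i) =
      ∑ s ∈ dyckPaths (2 * n),
        (RatFunc.X : RatFunc ℚ) ^ (∑ i ∈ highPeaks s, (2 * pht s i + 1)) *
          ∏ i ∈ Finset.range (2 * n + 1),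
            (1 - (RatFunc.X : RatFunc ℚ) ^ (2 * pht s i + 1))⁻¹ := by
  obtain ⟨t, ⟨h0, h1⟩, ht⟩ := exists_transcendental_mem_Ioo
  have hinj : Function.Injective (Polynomial.aeval t : Polynomial ℚ →ₐ[ℚ] ℝ).toRingHom :=
    transcendental_iff_injective.1 ht
  have hle := nonZeroDivisors_le_comap_nonZeroDivisors_of_injective _ hinj
  set φ := RatFunc.liftRingHom (Polynomial.aeval t : Polynomial ℚ →ₐ[ℚ] ℝ).toRingHom hle
  have hX : φ RatFunc.X = t := by simp [φ]
  apply φ.injective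
  simp only [map_div₀, map_sum, map_mul, map_pow, map_zpow₀, map_prod, map_inv₀, map_sub, map_one,
    hX]
  rw [prod_Icc_one_sub_pow, sum_dyckPaths_eq_pathSum t n h0.ne', ← altSeriesCoeff_eq_pathSum h0 h1]
  rfl

end Paper
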